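/- Let k be a field of characteristic zero, W a k-vector space, and m ≥ 1. Then the subspace of symmetric tensors in W^{⊗m} (elements fixed by the permutation action of S_m on tensor factors) equals the k-linear span of the set {w^{⊗m} : w ∈ W}. -/

import Mathlib

/- STATEMENT 19: Over a field of characteristic zero, the symmetric tensors in `W^{⊗m}`
(fixed points of the permutation action of `S_m`) are exactly the span of the powers
`w^{⊗m}`, `w ∈ W`. -/

open TensorProduct PiTensorProduct

noncomputable section

variable (k : Type*) [Field k] (W : Type*) [AddCommGroup W] [Module k W]

/-- The permutation action of `σ ∈ S_m` on `W^{⊗m}`, sending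
`w₁ ⊗ ⋯ ⊗ w_m` to `w_{σ⁻¹(1)} ⊗ ⋯ ⊗ w_{σ⁻¹(m)}`. -/
def permOp (m : ℕ) (σ : Equiv.Perm (Fin m)) : Module.End k (⨂[k]^m W) :=
  (PiTensorProduct.reindex k (fun _ : Fin m => W) σ).toLinearMap

theorem polar_aux (k : Type*) [Field k] (W : Type*) [AddCommGroup W] [Module k W] (m : ℕ)
    (v : Fin m → W) :
    ∑ T : Finset (Fin m), (((-1 : ℤ) ^ T.card : ℤ) : k) •
        (tprod k (fun _ : Fin m => ∑ i ∈ Tᶜ, v i) : ⨂[k]^m W) =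
      ∑ σ : Equiv.Perm (Fin m), permOp k W m σ (tprod k v) := by
  classical
  have h1 : ∀ T : Finset (Fin m), (tprod k (fun _ : Fin m => ∑ i ∈ Tᶜ, v i) : ⨂[k]^m W) =
      ∑ r : Fin m → Fin m, if (∀ j, r j ∈ Tᶜ) then tprod k (fun j => v (r j)) else 0 := by
    intro T
    rw [MultilinearMap.map_sum_finset (tprod k) (fun _ : Fin m => v) (fun _ => Tᶜ),
      ← Finset.sum_filter]
    refine Finset.sum_congr ?_ fun _ _ => rfl
    ext r
    simp [Fintype.mem_piFinset]
  have h2 : ∀ r : Fin m → Fin m,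
      (∑ T : Finset (Fin m), if (∀ j, r j ∈ Tᶜ) then (-1 : ℤ) ^ T.card else 0) =
      if Function.Bijective r then 1 else 0 := by
    intro r
    have := Finset.sum_powerset_neg_one_pow_card (x := (Finset.univ.image r)ᶜ)
    rw [← Finset.sum_filter]
    have e : (Finset.univ.filter fun T : Finset (Fin m) => ∀ j, r j ∈ Tᶜ) =
        ((Finset.univ.image r)ᶜ).powerset := by
      ext T
      simp only [Finset.mem_filter, Finset.mem_univ, true_and, Finset.mem_compl,
        Finset.mem_powerset, Finset.subset_iff, Finset.mem_image, not_exists]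
      constructor
      · intro h a ha j hj
        exact h j (hj ▸ ha)
      · intro h j hj
        exact h hj j rfl
    rw [e, this]
    congr 1
    rw [← Finite.surjective_iff_bijective, Finset.compl_eq_empty_iff]
    simp [Finset.eq_univ_iff_forall, Function.Surjective]
  have h4 : ∀ T : Finset (Fin m), (((-1 : ℤ) ^ T.card : ℤ) : k) •
        (tprod k (fun _ : Fin m => ∑ i ∈ Tᶜ, v i) : ⨂[k]^m W) =
      ∑ r : Fin m → Fin m, if (∀ j, r j ∈ Tᶜ) then
        (((-1 : ℤ) ^ T.card : ℤ) : k) • (tprod k (fun j => v (r j)) : ⨂[k]^m W) else 0 := by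
    intro T
    rw [h1 T, Finset.smul_sum]
    refine Finset.sum_congr rfl fun r _ => ?_
    split_ifs
    · rfl
    · exact smul_zero _
  rw [Finset.sum_congr rfl fun T _ => h4 T, Finset.sum_comm]
  have h3 : ∀ r : Fin m → Fin m,
      (∑ T : Finset (Fin m), if (∀ j, r j ∈ Tᶜ) then
        (((-1 : ℤ) ^ T.card : ℤ) : k) • (tprod k (fun j => v (r j)) : ⨂[k]^m W) else 0) =
      if Function.Bijective r then tprod k (fun j => v (r j)) else 0 := by
    intro r
    have := congrArg (fun z : ℤ => (z : k) • (tprod k (fun j => v (r j)) : ⨂[k]^m W)) (h2 r)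
    simpa only [Int.cast_sum, Int.cast_ite, Int.cast_zero, Int.cast_one, Finset.sum_smul,
      ite_smul, zero_smul, one_smul] using this
  rw [Finset.sum_congr rfl fun r _ => h3 r, ← Finset.sum_filter]
  symm
  refine Finset.sum_bij (fun σ _ => (⇑σ.symm : Fin m → Fin m)) ?_ ?_ ?_ ?_
  · intro σ _
    exact Finset.mem_filter.mpr ⟨Finset.mem_univ _, σ.symm.bijective⟩
  · intro a _ b _ h
    have := DFunLike.coe_injective h
    exact Equiv.symm_bijective.injective this
  · intro r hr
    exact ⟨(Equiv.ofBijective r (Finset.mem_filter.mp hr).2).symm, Finset.mem_univ _, by ext; simp⟩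
  · intro σ _
    exact PiTensorProduct.reindex_tprod σ v

theorem stmt_19 (k : Type*) [Field k] [CharZero k]
    (W : Type*) [AddCommGroup W] [Module k W] (m : ℕ) (hm : 1 ≤ m)
    (x : ⨂[k]^m W) :
    (∀ σ : Equiv.Perm (Fin m), permOp k W m σ x = x) ↔
      x ∈ Submodule.span k {t : ⨂[k]^m W | ∃ w : W, t = tprod k (fun _ : Fin m => w)} := by
  constructor
  · intro h
    have key : ∀ y : ⨂[k]^m W, (∑ σ : Equiv.Perm (Fin m), permOp k W m σ y) ∈
        Submodule.span k {t : ⨂[k]^m W | ∃ w : W, t = tprod k (fun _ : Fin m => w)} := by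
      intro y
      induction y using PiTensorProduct.induction_on with
      | smul_tprod r v =>
        simp only [map_smul]
        rw [← Finset.smul_sum, ← polar_aux]
        refine Submodule.smul_mem _ _ (Submodule.sum_mem _ fun T _ => ?_)
        refine Submodule.smul_mem _ _ (Submodule.subset_span ?_)
        exact ⟨_, rfl⟩
      | add a b ha hb =>
        simp only [map_add, Finset.sum_add_distrib]
        exact Submodule.add_mem _ ha hb
    have hx := key x
    simp only [h, Finset.sum_const, Finset.card_univ] at hx
    rw [← Nat.cast_smul_eq_nsmul k] at hx
    exact (Submodule.smul_mem_iff _ (Nat.cast_ne_zero.mpr Fintype.card_ne_zero)).mp hx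
  · intro h σ
    induction h using Submodule.span_induction with
    | mem t ht =>
      obtain ⟨w, rfl⟩ := ht
      exact PiTensorProduct.reindex_tprod σ _
    | zero => simp
    | add a b _ _ ha hb => rw [map_add, ha, hb]
    | smul c a _ ha => rw [map_smul, ha]

end
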